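/- Let δ > 0 and let a, b, c > 0 satisfy the strict triangle inequalities a < b + c, b < a + c, c < a + b. Suppose every angle of the hyperbolic triangle with side lengths a, b, c is strictly greater than δ, where the angle opposite the side a is arccos((cosh b cosh c − cosh a)/(sinh b sinh c)) and similarly for the other two. Then every angle of the Euclidean comparison triangle, i.e. arccos((b² + c² − a²)/(2bc)) and its two analogues, lies in the open interval (δ, π − 2δ). (Lemma 4.1 of the paper in the hyperbolic case, for a single triangle: angle bounds pass from a hyperbolic triangle to its Euclidean comparison triangle.) -/

import Mathlib

open Real

/-!
With `s = (a + b + c) / 2`, half the versine of an angle, `(1 - cos α) / 2`, is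
`(s - b) (s - c) / (b c)` in the Euclidean triangle and
`sinh (s - b) sinh (s - c) / (sinh b sinh c)` in the hyperbolic one. By convexity of `sinh` on
`[0, ∞)` the hyperbolic quantity is the smaller one, so each hyperbolic angle is at most the
corresponding comparison angle. The upper bound follows because the comparison angles sum to `π`.
-/

/-- The angle opposite the side of length `a` in a Euclidean triangle with side lengths `a`, `b`,
`c`, given by the law of cosines; it is `π / 2` by convention when `b` or `c` is `0`. -/
noncomputable def euclideanAngle (a b c : ℝ) : ℝ :=
  arccos ((b ^ 2 + c ^ 2 - a ^ 2) / (2 * b * c))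

/-- The angle opposite the side of length `a` in a hyperbolic triangle with side lengths `a`, `b`,
`c` in curvature `-1`, given by the hyperbolic law of cosines; it is `π / 2` by convention when `b`
or `c` is `0`. -/
noncomputable def hyperbolicAngle (a b c : ℝ) : ℝ :=
  arccos ((cosh b * cosh c - cosh a) / (sinh b * sinh c))

section HyperbolicSine

lemma convexOn_sinh : ConvexOn ℝ (Set.Ici 0) sinh := by
  refine MonotoneOn.convexOn_of_deriv (convex_Ici 0) continuous_sinh.continuousOn
    differentiable_sinh.differentiableOn ?_
  rw [Real.deriv_sinh, interior_Ici]
  exact cosh_strictMonoOn.monotoneOn.mono Set.Ioi_subset_Ici_self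

lemma sinh_mul_le_mul_sinh {t x : ℝ} (ht₀ : 0 ≤ t) (ht₁ : t ≤ 1) (hx : 0 ≤ x) :
    sinh (t * x) ≤ t * sinh x := by
  simpa using convexOn_sinh.2 (Set.mem_Ici.2 hx) (Set.mem_Ici.2 le_rfl) ht₀
    (sub_nonneg.2 ht₁) (add_sub_cancel t 1)

lemma sinh_div_sinh_le_div {x y : ℝ} (hx : 0 ≤ x) (hxy : x ≤ y) : sinh x / sinh y ≤ x / y := by
  obtain rfl | hy := (hx.trans hxy).eq_or_lt
  · simp
  · rw [div_le_iff₀ (sinh_pos_iff.2 hy)]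
    simpa [hy.ne'] using
      sinh_mul_le_mul_sinh (div_nonneg hx hy.le) (div_le_one_of_le₀ hxy hy.le) hy.le

end HyperbolicSine

section AngleComparison

variable {a b c : ℝ}

lemma law_cos_eq_one_sub (hb : b ≠ 0) (hc : c ≠ 0) :
    (b ^ 2 + c ^ 2 - a ^ 2) / (2 * b * c) =
      1 - 2 * ((a + b - c) / 2 / b * ((a + c - b) / 2 / c)) := by
  field_simp
  ring

lemma cosh_add_sub_cosh_sub (x y : ℝ) : cosh (x + y) - cosh (x - y) = 2 * (sinh x * sinh y) := by
  rw [cosh_add, cosh_sub]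
  ring

lemma hyperbolic_law_cos_eq_one_sub (hb : b ≠ 0) (hc : c ≠ 0) :
    (cosh b * cosh c - cosh a) / (sinh b * sinh c) =
      1 - 2 * (sinh ((a + b - c) / 2) / sinh b * (sinh ((a + c - b) / 2) / sinh c)) := by
  have hsb : sinh b ≠ 0 := sinh_ne_zero.2 hb
  have hsc : sinh c ≠ 0 := sinh_ne_zero.2 hc
  have hcosh : cosh a - cosh (b - c) =
      2 * (sinh ((a + b - c) / 2) * sinh ((a + c - b) / 2)) := by
    rw [← cosh_add_sub_cosh_sub]
    ring_nf
  rw [cosh_sub] at hcosh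
  field_simp
  linarith

theorem hyperbolicAngle_le_euclideanAngle (hb : 0 < b) (hc : 0 < c)
    (habc : a ≤ b + c) (hbac : b ≤ a + c) (hcab : c ≤ a + b) :
    hyperbolicAngle a b c ≤ euclideanAngle a b c := by
  have hx : 0 ≤ (a + b - c) / 2 := by linarith
  have hy : 0 ≤ (a + c - b) / 2 := by linarith
  have hxb : sinh ((a + b - c) / 2) / sinh b ≤ (a + b - c) / 2 / b :=
    sinh_div_sinh_le_div hx (by linarith)
  have hyc : sinh ((a + c - b) / 2) / sinh c ≤ (a + c - b) / 2 / c :=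
    sinh_div_sinh_le_div hy (by linarith)
  have hy₀ : 0 ≤ sinh ((a + c - b) / 2) / sinh c :=
    div_nonneg (sinh_nonneg_iff.2 hy) (sinh_pos_iff.2 hc).le
  apply arccos_le_arccos
  rw [law_cos_eq_one_sub hb.ne' hc.ne', hyperbolic_law_cos_eq_one_sub hb.ne' hc.ne']
  linarith [mul_le_mul hxb hyc hy₀ (div_nonneg hx hb.le)]

end AngleComparison

section AngleSum

lemma euclideanAngle_comm (a b c : ℝ) : euclideanAngle a b c = euclideanAngle a c b := by
  simp only [euclideanAngle, add_comm (b ^ 2), mul_right_comm 2 b]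

lemma angle_eq_euclideanAngle {V : Type*} [NormedAddCommGroup V] [InnerProductSpace ℝ V]
    (x y : V) : InnerProductGeometry.angle x y = euclideanAngle ‖x - y‖ ‖x‖ ‖y‖ := by
  rw [InnerProductGeometry.angle, euclideanAngle,
    real_inner_eq_norm_mul_self_add_norm_mul_self_sub_norm_sub_mul_self_div_two, div_div,
    mul_assoc 2]
  simp only [sq]

/-- By the intermediate value theorem for `y ↦ ‖x - y‖` on the sphere of radius `c`, with `x`
fixed. -/
lemma exists_norm_eq_norm_eq_norm_sub_eq {E : Type*} [NormedAddCommGroup E] [NormedSpace ℝ E]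
    (hE : 1 < Module.rank ℝ E) {a b c : ℝ}
    (habc : a ≤ b + c) (hbac : b ≤ a + c) (hcab : c ≤ a + b) :
    ∃ x y : E, ‖x‖ = b ∧ ‖y‖ = c ∧ ‖x - y‖ = a := by
  have hb : 0 ≤ b := by linarith
  have hc : 0 ≤ c := by linarith
  have : Nontrivial E := rank_pos_iff_nontrivial.1 (zero_lt_one.trans hE)
  obtain ⟨u, hu⟩ := exists_norm_eq E zero_le_one
  have hnear : ‖b • u - c • u‖ ≤ a := by
    rw [← sub_smul, norm_smul, hu, mul_one, Real.norm_eq_abs, abs_le]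
    constructor <;> linarith
  have hfar : a ≤ ‖b • u - -(c • u)‖ := by
    rwa [sub_neg_eq_add, ← add_smul, norm_smul, hu, mul_one, norm_of_nonneg (add_nonneg hb hc)]
  have hcu : c • u ∈ Metric.sphere (0 : E) c := by simp [norm_smul, hu, hc]
  have hcu' : -(c • u) ∈ Metric.sphere (0 : E) c := by simp [norm_smul, hu, hc]
  obtain ⟨y, hy, hya⟩ := (isPreconnected_sphere hE 0 c).intermediate_value hcu hcu'
    (f := fun y => ‖b • u - y‖) (by fun_prop) ⟨hnear, hfar⟩
  exact ⟨b • u, y, by simp [norm_smul, hu, hb], mem_sphere_zero_iff_norm.1 hy, hya⟩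

theorem euclideanAngle_add_add_eq_pi {a b c : ℝ} (hc : 0 < c)
    (habc : a ≤ b + c) (hbac : b ≤ a + c) (hcab : c ≤ a + b) :
    euclideanAngle a b c + euclideanAngle b a c + euclideanAngle c a b = π := by
  obtain ⟨x, y, rfl, rfl, rfl⟩ := exists_norm_eq_norm_eq_norm_sub_eq (E := ℂ)
    (by simp) habc hbac hcab
  have hsum := InnerProductGeometry.angle_add_angle_sub_add_angle_sub_eq_pi x (norm_pos_iff.1 hc)
  simp only [angle_eq_euclideanAngle, sub_sub_cancel, norm_sub_rev y x] at hsum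
  rw [euclideanAngle_comm ‖x‖, euclideanAngle_comm ‖y‖]
  linarith

end AngleSum

/-- Lemma 4.1 (hyperbolic case, single triangle): if every angle of the hyperbolic
triangle with side lengths `a, b, c` is strictly greater than `δ`, then every angle of
the Euclidean comparison triangle lies in the open interval `(δ, π - 2δ)`. -/
theorem comparison_angles_in_Ioo (δ a b c : ℝ) (hδ : 0 < δ)
    (ha : 0 < a) (hb : 0 < b) (hc : 0 < c)
    (tab : a < b + c) (tbc : b < a + c) (tca : c < a + b)
    (hA : δ < Real.arccos ((Real.cosh b * Real.cosh c - Real.cosh a) /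
        (Real.sinh b * Real.sinh c)))
    (hB : δ < Real.arccos ((Real.cosh a * Real.cosh c - Real.cosh b) /
        (Real.sinh a * Real.sinh c)))
    (hC : δ < Real.arccos ((Real.cosh a * Real.cosh b - Real.cosh c) /
        (Real.sinh a * Real.sinh b))) :
    Real.arccos ((b ^ 2 + c ^ 2 - a ^ 2) / (2 * b * c)) ∈ Set.Ioo δ (π - 2 * δ) ∧
    Real.arccos ((a ^ 2 + c ^ 2 - b ^ 2) / (2 * a * c)) ∈ Set.Ioo δ (π - 2 * δ) ∧
    Real.arccos ((a ^ 2 + b ^ 2 - c ^ 2) / (2 * a * b)) ∈ Set.Ioo δ (π - 2 * δ) := by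
  have hA' : δ < euclideanAngle a b c :=
    hA.trans_le (hyperbolicAngle_le_euclideanAngle hb hc tab.le tbc.le tca.le)
  have hB' : δ < euclideanAngle b a c :=
    hB.trans_le (hyperbolicAngle_le_euclideanAngle ha hc tbc.le tab.le (by linarith))
  have hC' : δ < euclideanAngle c a b :=
    hC.trans_le (hyperbolicAngle_le_euclideanAngle ha hb tca.le (by linarith) (by linarith))
  have hsum : euclideanAngle a b c + euclideanAngle b a c + euclideanAngle c a b = π :=
    euclideanAngle_add_add_eq_pi hc tab.le tbc.le tca.le
  exact ⟨⟨hA', show euclideanAngle a b c < _ by linarith⟩,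
    ⟨hB', show euclideanAngle b a c < _ by linarith⟩,
    ⟨hC', show euclideanAngle c a b < _ by linarith⟩⟩
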